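/- There exists N such that for every n ≥ N there is a Boolean function f on n variables with f⁻¹(1) nonempty such that for every ε ∈ (0, 1] and every CNF formula φ with φ⁻¹(1) ⊆ f⁻¹(1) and Pr_{x uniform in f⁻¹(1)}[φ(x) = 1] ≥ ε, one has |φ| ≥ ε · 2^{n−7}/n. -/

import Mathlib

/-!
The function `f` is found by counting. Write `M = 2 ^ 2 ^ n` for the number of Boolean functions.

* Complementing `f` shows that at least `M / 2` functions have at least `2 ^ (n - 1)` ones
  (`half_le_card_large`).
* If such an `f` violates the bound through a formula `φ`, then `φ` accepts a set of at least
  `64 * n * |φ|` points, all contained in `f⁻¹(1)` (`violation_accepts_many`). At most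
  `M / 2 ^ (64 * n * |φ|)` functions contain that set (`card_above_mul`).
* There are `4 ^ n` clauses, so with `r = 2 ^ (-64 n)` the sum of `r ^ |φ|` over nonempty `φ` is
  `(1 + r) ^ (4 ^ n) - 1 ≤ 1 / 8`. The empty formula only rules out the constant function `1`.

So at most `M / 8 + 1 < M / 2` functions are ruled out, and a large `f` survives. The sum runs
over all formulas at once, so no union over `ε` is needed: the extreme case is
`ε = prUnif f φ`.
-/

/-- A literal over `n` variables: a coordinate `x_i` (if `neg = false`)
or its negation `¬ x_i` (if `neg = true`). -/
structure Lit (n : ℕ) where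
  idx : Fin n
  neg : Bool
deriving DecidableEq

/-- Evaluation of a literal at an assignment. -/
def Lit.eval {n : ℕ} (l : Lit n) (x : Fin n → Bool) : Bool :=
  if l.neg then !(x l.idx) else x l.idx

/-- A clause: a finite set of literals, evaluated as their disjunction. -/
abbrev Clause (n : ℕ) := Finset (Lit n)

/-- A CNF formula: a finite set of clauses, evaluated as their conjunction.
Its size is its number of clauses (`Finset.card`). -/
abbrev CNF (n : ℕ) := Finset (Clause n)

/-- `φ.sat x` means the CNF formula `φ` evaluates to `1` at `x`. -/
def CNF.sat {n : ℕ} (φ : CNF n) (x : Fin n → Bool) : Prop :=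
  ∀ c ∈ φ, ∃ l ∈ c, l.eval x = true

instance {n : ℕ} (φ : CNF n) (x : Fin n → Bool) : Decidable (φ.sat x) :=
  inferInstanceAs (Decidable (∀ c ∈ φ, ∃ l ∈ c, Lit.eval l x = true))

/-- `φ⁻¹(1) ⊆ f⁻¹(1)`: the formula does not err on inputs where `f` is `0`. -/
def CNF.onesided {n : ℕ} (φ : CNF n) (f : (Fin n → Bool) → Bool) : Prop :=
  ∀ x, φ.sat x → f x = true

/-- A CNF formula is monotone if none of its literals is negated. -/
def CNF.mono {n : ℕ} (φ : CNF n) : Prop :=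
  ∀ c ∈ φ, ∀ l ∈ c, l.neg = false

/-- A distribution on `f⁻¹(1)`: nonnegative, supported on `f⁻¹(1)`, summing to 1. -/
def IsDistOn {n : ℕ} (μ : (Fin n → Bool) → ℝ) (f : (Fin n → Bool) → Bool) : Prop :=
  (∀ x, 0 ≤ μ x) ∧ (∀ x, f x = false → μ x = 0) ∧ (∑ x, μ x) = 1

/-- `Pr_{x ∼ μ}[φ(x) = 1]`. -/
noncomputable def CNF.pr {n : ℕ} (φ : CNF n) (μ : (Fin n → Bool) → ℝ) : ℝ :=
  ∑ x, if φ.sat x then μ x else 0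

/-- `D_μ(f)`: the maximum, over CNF formulas `φ` with `φ⁻¹(1) ⊆ f⁻¹(1)` and `|φ| ≥ 1`,
of `Pr_{x∼μ}[φ(x)=1] / |φ|` (0 if there is no such formula). -/
noncomputable def Dmu {n : ℕ} (f : (Fin n → Bool) → Bool) (μ : (Fin n → Bool) → ℝ) : ℝ :=
  sSup {r : ℝ | ∃ φ : CNF n, φ.onesided f ∧ 1 ≤ φ.card ∧ r = φ.pr μ / φ.card}

/-- `D(f)`: the minimum of `D_μ(f)` over distributions `μ` on `f⁻¹(1)`. -/
noncomputable def Dof {n : ℕ} (f : (Fin n → Bool) → Bool) : ℝ :=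
  sInf {r : ℝ | ∃ μ, IsDistOn μ f ∧ r = Dmu f μ}

/-- The monotone variant `D⁺_μ(f)`, restricted to monotone CNF formulas. -/
noncomputable def DmuPlus {n : ℕ} (f : (Fin n → Bool) → Bool) (μ : (Fin n → Bool) → ℝ) : ℝ :=
  sSup {r : ℝ | ∃ φ : CNF n, φ.mono ∧ φ.onesided f ∧ 1 ≤ φ.card ∧ r = φ.pr μ / φ.card}

/-- `D⁺(f)`: the minimum of `D⁺_μ(f)` over distributions `μ` on `f⁻¹(1)`. -/
noncomputable def DPlus {n : ℕ} (f : (Fin n → Bool) → Bool) : ℝ :=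
  sInf {r : ℝ | ∃ μ, IsDistOn μ f ∧ r = DmuPlus f μ}

/-- A list of CNF formulas computes `f` as their pointwise disjunction. -/
def ComputedByOr {n : ℕ} (L : List (CNF n)) (f : (Fin n → Bool) → Bool) : Prop :=
  ∀ x, f x = true ↔ ∃ φ ∈ L, φ.sat x

/-- `L₃(f)`: the minimum size (total number of clauses) of a depth-3 formula computing `f`. -/
noncomputable def L3 {n : ℕ} (f : (Fin n → Bool) → Bool) : ℕ :=
  sInf {s : ℕ | ∃ L : List (CNF n), ComputedByOr L f ∧ s = (L.map Finset.card).sum}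

/-- `L₃⁺(f)`: the minimum size of a depth-3 monotone formula computing `f`. -/
noncomputable def L3Plus {n : ℕ} (f : (Fin n → Bool) → Bool) : ℕ :=
  sInf {s : ℕ | ∃ L : List (CNF n), (∀ φ ∈ L, φ.mono) ∧ ComputedByOr L f ∧
    s = (L.map Finset.card).sum}

/-- The number of ones in a Boolean input. -/
def ones {n : ℕ} (x : Fin n → Bool) : ℕ := (Finset.univ.filter fun i => x i = true).card

/-- The parity function: `1` iff the number of ones is odd. -/
def parityF (n : ℕ) : (Fin n → Bool) → Bool := fun x => decide (ones x % 2 = 1)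

/-- The majority function: `1` iff the number of ones is at least `n/2`. -/
def majF (n : ℕ) : (Fin n → Bool) → Bool := fun x => decide (n ≤ 2 * ones x)

/-- `Pr_{x uniform in f⁻¹(1)}[φ(x) = 1]`. -/
noncomputable def prUnif {n : ℕ} (f : (Fin n → Bool) → Bool) (φ : CNF n) : ℝ :=
  ((Finset.univ.filter fun x => f x = true ∧ φ.sat x).card : ℝ) /
    ((Finset.univ.filter fun x => f x = true).card : ℝ)

/-- `x` is an isolated solution of `φ`: `φ(x)=1` and `φ(y)=0` for every `y`
differing from `x` in exactly one coordinate. -/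
def IsIsolated {n : ℕ} (φ : CNF n) (x : Fin n → Bool) : Prop :=
  φ.sat x ∧ ∀ y : Fin n → Bool, hammingDist x y = 1 → ¬ φ.sat y

namespace CNFCounting

open Finset

/-- A literal is a coordinate together with a sign. -/
def litEquiv (n : ℕ) : Lit n ≃ Fin n × Bool where
  toFun l := (l.idx, l.neg)
  invFun p := ⟨p.1, p.2⟩
  left_inv _ := rfl
  right_inv _ := rfl

instance (n : ℕ) : Fintype (Lit n) := Fintype.ofEquiv _ (litEquiv n).symm

lemma card_clause (n : ℕ) : Fintype.card (Clause n) = 4 ^ n := by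
  have h : Fintype.card (Lit n) = 2 * n := by
    rw [Fintype.card_congr (litEquiv n), Fintype.card_prod, Fintype.card_fin, Fintype.card_bool,
      mul_comm]
  rw [Fintype.card_finset, h, pow_mul]
  norm_num

/-- The number of ones of a Boolean function. -/
def weight {n : ℕ} (f : (Fin n → Bool) → Bool) : ℕ := #{x | f x = true}

/-- The set of assignments accepted by a formula. -/
def accepted {n : ℕ} (φ : CNF n) : Finset (Fin n → Bool) := {x | φ.sat x}

/-- The Boolean functions that are `1` on all of `S`. -/
def above {n : ℕ} (S : Finset (Fin n → Bool)) : Finset ((Fin n → Bool) → Bool) :=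
  {f | ∀ x ∈ S, f x = true}

/-- The Boolean functions with at least `2 ^ (n - 1)` ones. -/
def large (n : ℕ) : Finset ((Fin n → Bool) → Bool) := {f | 2 ^ n ≤ 2 * weight f}

lemma weight_add_weight_not {n : ℕ} (f : (Fin n → Bool) → Bool) :
    weight f + weight (fun x => !(f x)) = 2 ^ n := by
  have h := card_filter_add_card_filter_not (s := (univ : Finset (Fin n → Bool)))
    (fun x => f x = true)
  simpa [weight] using h

lemma half_le_card_large (n : ℕ) :
    Fintype.card ((Fin n → Bool) → Bool) ≤ 2 * #(large n) := by
  classical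
  have hcover : (univ : Finset ((Fin n → Bool) → Bool)) ⊆
      large n ∪ (large n).image (fun f x => !(f x)) := by
    intro f _
    have h := weight_add_weight_not f
    by_cases hf : 2 ^ n ≤ 2 * weight f
    · exact mem_union_left _ (by simpa [large] using hf)
    · refine mem_union_right _ (mem_image.2 ⟨fun x => !(f x), ?_, by simp⟩)
      simp only [large, mem_filter, mem_univ, true_and]
      omega
  calc Fintype.card ((Fin n → Bool) → Bool) ≤
        #(large n ∪ (large n).image fun f x => !(f x)) := card_le_card hcover
    _ ≤ #(large n) + #((large n).image fun f x => !(f x)) := card_union_le _ _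
    _ ≤ #(large n) + #(large n) := by
        have := card_image_le (s := large n) (f := fun f x => !(f x))
        omega
    _ = _ := by ring

lemma card_above_mul {n : ℕ} (S : Finset (Fin n → Bool)) :
    #(above S) * 2 ^ #S = Fintype.card ((Fin n → Bool) → Bool) := by
  classical
  have h : above S = Fintype.piFinset
      (fun x => if x ∈ S then ({true} : Finset Bool) else univ) := by
    ext f
    simp only [above, mem_filter, mem_univ, true_and, Fintype.mem_piFinset]
    refine forall_congr' fun x => ?_
    by_cases hx : x ∈ S <;> simp [hx]
  have h2 : (2 : ℕ) ^ #S = ∏ x : Fin n → Bool, if x ∈ S then 2 else 1 := by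
    rw [prod_ite_mem, univ_inter, prod_const]
  have h3 : Fintype.card ((Fin n → Bool) → Bool) = ∏ _x : Fin n → Bool, 2 := by
    rw [prod_const, Fintype.card_fun, Fintype.card_bool, card_univ]
  rw [h, Fintype.card_piFinset, h2, h3, ← prod_mul_distrib]
  refine prod_congr rfl fun x _ => ?_
  by_cases hx : x ∈ S <;> simp [hx]

lemma card_above_le {n m : ℕ} (S : Finset (Fin n → Bool)) (h : m ≤ #S) :
    (#(above S) : ℝ) ≤ Fintype.card ((Fin n → Bool) → Bool) * (1 / 2 ^ m) := by
  rw [mul_one_div, le_div_iff₀ (by positivity)]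
  have h1 : #(above S) * 2 ^ m ≤ Fintype.card ((Fin n → Bool) → Bool) := by
    rw [← card_above_mul S]
    gcongr
    norm_num
  exact_mod_cast h1

/-- The generating function of the formula size, at `r = 2 ^ (-64 n)`. -/
lemma sum_nonempty_le {n : ℕ} (hn : 1 ≤ n) :
    ∑ φ ∈ (univ : Finset (CNF n)).erase ∅, ((1 : ℝ) / 2 ^ (64 * n)) ^ #φ ≤ 1 / 8 := by
  classical
  set r : ℝ := 1 / 2 ^ (64 * n) with hr
  have hr0 : 0 ≤ r := by positivity
  have hall : ∑ φ : CNF n, r ^ #φ = (r + 1) ^ (4 ^ n) := by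
    have h := Fintype.sum_pow_mul_eq_add_pow (Clause n) r 1
    rw [card_clause] at h
    simpa only [one_pow, mul_one] using h
  have hsplit := add_sum_erase (univ : Finset (CNF n)) (fun φ => r ^ #φ) (mem_univ ∅)
  have hsmall : (4 ^ n : ℕ) * r ≤ 1 / 16 := by
    have e : ((4 ^ n : ℕ) : ℝ) * r = (1 / 2 ^ 62) ^ n := by
      rw [hr, pow_mul]
      push_cast
      rw [one_div, ← inv_pow, ← mul_pow]
      norm_num
    rw [e]
    calc ((1 : ℝ) / 2 ^ 62) ^ n ≤ (1 / 2 ^ 62) ^ 1 :=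
          pow_le_pow_of_le_one (by positivity) (by norm_num) hn
      _ ≤ _ := by norm_num
  have hpow : (r + 1) ^ (4 ^ n) ≤ Real.exp ((4 ^ n : ℕ) * r) := by
    rw [Real.exp_nat_mul]
    exact pow_le_pow_left₀ (by positivity) (Real.add_one_le_exp r) _
  have hx0 : 0 ≤ ((4 ^ n : ℕ) : ℝ) * r := by positivity
  have hexp := Real.abs_exp_sub_one_le (x := ((4 ^ n : ℕ) : ℝ) * r)
    (by rw [abs_of_nonneg hx0]; linarith)
  rw [abs_of_nonneg hx0] at hexp
  have := le_of_abs_le hexp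
  simp only [card_empty, pow_zero] at hsplit
  linarith

/-- A large function violating the bound through `φ` contains an accepted set that is big
compared to `|φ|`. -/
lemma violation_accepts_many {n : ℕ} (hn : 1 ≤ n) {f : (Fin n → Bool) → Bool}
    (hf : f ∈ large n) {φ : CNF n} {ε : ℝ} (hpr : ε ≤ prUnif f φ)
    (hlt : (#φ : ℝ) < ε * (2 : ℝ) ^ ((n : ℝ) - 7) / n) :
    64 * n * #φ ≤ #(accepted φ) := by
  have hn0 : (0 : ℝ) < n := by exact_mod_cast hn
  have hf' : (2 : ℝ) ^ n ≤ 2 * weight f := by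
    have : 2 ^ n ≤ 2 * weight f := by simpa [large] using hf
    exact_mod_cast this
  have h2n : (0 : ℝ) < 2 ^ n := by positivity
  have hw : (0 : ℝ) < weight f := by linarith
  have hS : (#{x | f x = true ∧ φ.sat x} : ℝ) ≤ #(accepted φ) := by
    have : #{x | f x = true ∧ φ.sat x} ≤ #(accepted φ) :=
      card_le_card fun x hx => by
        simp only [mem_filter, mem_univ, true_and] at hx
        simpa [accepted] using hx.2
    exact_mod_cast this
  have hε : ε * weight f ≤ #(accepted φ) := by
    have : ε ≤ (#{x | f x = true ∧ φ.sat x} : ℝ) / weight f := hpr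
    rw [le_div_iff₀ hw] at this
    linarith
  have hpow : (2 : ℝ) ^ ((n : ℝ) - 7) = 2 ^ n / 128 := by
    rw [Real.rpow_sub (by norm_num), Real.rpow_natCast]
    norm_num
  rw [hpow, lt_div_iff₀ hn0] at hlt
  have hεpos : 0 ≤ ε := by
    by_contra h
    have h0 : (0 : ℝ) ≤ #φ * n := by positivity
    nlinarith
  have key : ε * 2 ^ n ≤ ε * (2 * weight f) := mul_le_mul_of_nonneg_left hf' hεpos
  have : (64 * n * #φ : ℝ) ≤ #(accepted φ) := by nlinarith
  exact_mod_cast this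

/-- Some large function, different from the constant `1`, contains none of the big accepted
sets. -/
lemma exists_avoiding {n : ℕ} (hn : 1 ≤ n) :
    ∃ f ∈ large n, f ≠ (fun _ => true) ∧
      ∀ φ : CNF n, φ ≠ ∅ → 64 * n * #φ ≤ #(accepted φ) → f ∉ above (accepted φ) := by
  classical
  by_contra! hcon
  set T : Finset (CNF n) := (univ.erase ∅).filter fun φ => 64 * n * #φ ≤ #(accepted φ) with hT
  set M : ℕ := Fintype.card ((Fin n → Bool) → Bool) with hM
  have hcover : large n ⊆ {fun _ => true} ∪ T.biUnion fun φ => above (accepted φ) := by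
    intro f hf
    by_cases h1 : f = fun _ => true
    · exact mem_union_left _ (by simp [h1])
    · obtain ⟨φ, h0, hbig, hmem⟩ := hcon f hf h1
      exact mem_union_right _ (mem_biUnion.2 ⟨φ, by simp [hT, h0.ne_empty, hbig], hmem⟩)
  have hcard : (#(large n) : ℝ) ≤ 1 + ∑ φ ∈ T, (#(above (accepted φ)) : ℝ) := by
    have : #(large n) ≤ 1 + ∑ φ ∈ T, #(above (accepted φ)) :=
      (card_le_card hcover).trans <| (card_union_le _ _).trans <| by
        rw [card_singleton]
        gcongr
        exact card_biUnion_le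
    exact_mod_cast this
  have hsum : ∑ φ ∈ T, (#(above (accepted φ)) : ℝ) ≤ M * (1 / 8) :=
    calc ∑ φ ∈ T, (#(above (accepted φ)) : ℝ)
        ≤ ∑ φ ∈ T, M * ((1 : ℝ) / 2 ^ (64 * n)) ^ #φ := by
          refine sum_le_sum fun φ hφ => ?_
          have h := card_above_le (accepted φ) (mem_filter.1 hφ).2
          rwa [one_div_pow, ← pow_mul]
      _ ≤ ∑ φ ∈ (univ : Finset (CNF n)).erase ∅, M * ((1 : ℝ) / 2 ^ (64 * n)) ^ #φ :=
          sum_le_sum_of_subset_of_nonneg (filter_subset _ _) fun _ _ _ => by positivity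
      _ ≤ M * (1 / 8) := by
          rw [← mul_sum]
          gcongr
          exact sum_nonempty_le hn
  have hhalf : (M : ℝ) ≤ 2 * #(large n) := by exact_mod_cast half_le_card_large n
  have hM4 : (4 : ℝ) ≤ M := by
    have h2 : 2 ≤ 2 ^ n := by simpa using Nat.pow_le_pow_right (n := 2) (by norm_num) hn
    have : 2 ^ 2 ≤ M := by
      rw [hM, Fintype.card_fun, Fintype.card_fun, Fintype.card_bool, Fintype.card_fin]
      exact Nat.pow_le_pow_right (by norm_num) h2
    exact_mod_cast this
  linarith

end CNFCounting

open Finset CNFCounting in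
/-- universal lower bound: some `f` requires size `ε·2^{n−7}/n` for every
one-sided CNF approximator with advantage `ε`. -/
theorem stmt10 : ∃ N : ℕ, ∀ n : ℕ, N ≤ n →
    ∃ f : (Fin n → Bool) → Bool, (∃ x, f x = true) ∧
      ∀ ε : ℝ, 0 < ε → ε ≤ 1 → ∀ φ : CNF n, φ.onesided f → ε ≤ prUnif f φ →
        ε * (2 : ℝ) ^ ((n : ℝ) - 7) / n ≤ (φ.card : ℝ) := by
  refine ⟨1, fun n hn => ?_⟩
  obtain ⟨f, hf, hne, havoid⟩ := exists_avoiding hn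
  refine ⟨f, ?_, fun ε _ _ φ hone hpr => ?_⟩
  · have hw : 2 ^ n ≤ 2 * weight f := by simpa [large] using hf
    have hpos : 0 < weight f := by
      have : 0 < 2 ^ n := by positivity
      omega
    obtain ⟨x, hx⟩ := card_pos.1 hpos
    exact ⟨x, by simpa using hx⟩
  · by_contra! hlt
    have hφ : φ ≠ ∅ := by
      rintro rfl
      exact hne (funext fun x => hone x fun c hc => absurd hc (notMem_empty c))
    refine havoid φ hφ (violation_accepts_many hn hf hpr hlt) ?_
    simp only [above, accepted, mem_filter, mem_univ, true_and]
    exact hone
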